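/- Let k ≥ 2. If C_{k+1}^{>++} is nonempty, then both C_k^{>++} and C_k^{<++} are nonempty; moreover the curves f_k^> and f_k^< lie strictly below the curve f_{k+1}^>: for every x in the common domain, f_k^>(x) < f_{k+1}^>(x) and f_k^<(x) < f_{k+1}^>(x). -/

import Mathlib

open Set Filter Classical

noncomputable section

/-- `u c s` is the solution of `-(p·u')' + q·u = c·w·u` with `u c s s = 0` and
`(u c s)' s = 1/(p s)`; `u'` is its `t`-derivative. -/
def IsSolFamily (p q w : ℝ → ℝ) (u u' : ℝ → ℝ → ℝ → ℝ) : Prop :=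
  ∀ c s : ℝ, u c s s = 0 ∧ u' c s s = 1 / p s ∧
    ∀ t : ℝ, HasDerivAt (u c s) (u' c s t) t ∧
      HasDerivAt (fun τ => p τ * u' c s τ) (q t * u c s t - c * w t * u c s t) t

/-- Zero set of `u c s` strictly after `s`. -/
def zeroSet (u : ℝ → ℝ → ℝ → ℝ) (c s : ℝ) : Set ℝ := {t | s < t ∧ u c s t = 0}

/-- The zero-function `φ_c(s)`, valued in `EReal` (equal to `⊤` when `u c s`
never vanishes after `s`). -/
noncomputable def phiE (u : ℝ → ℝ → ℝ → ℝ) (c s : ℝ) : EReal :=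
  if (zeroSet u c s).Nonempty then ((sInf (zeroSet u c s) : ℝ) : EReal) else ⊤

/-- The zero-function as a map `EReal → EReal` (`⊤` propagates). -/
noncomputable def phiStep (u : ℝ → ℝ → ℝ → ℝ) (c : ℝ) (x : EReal) : EReal :=
  if x = ⊤ ∨ x = ⊥ then ⊤ else phiE u c x.toReal

/-- `Φ_k^>(a,b)`: composition of `k` alternating zero-functions `φ_a^m, φ_b^n`,
starting with `φ_a^m`. -/
noncomputable def PhiGt (uM uN : ℝ → ℝ → ℝ → ℝ) (a b : ℝ) : ℕ → EReal → EReal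
  | 0 => id
  | k + 1 => (if k % 2 = 0 then phiStep uM a else phiStep uN b) ∘ PhiGt uM uN a b k

/-- `Φ_k^<(a,b)`: composition of `k` alternating zero-functions, starting with
`φ_b^n`. -/
noncomputable def PhiLt (uM uN : ℝ → ℝ → ℝ → ℝ) (a b : ℝ) : ℕ → EReal → EReal
  | 0 => id
  | k + 1 => (if k % 2 = 0 then phiStep uN b else phiStep uM a) ∘ PhiLt uM uN a b k

/-- `C_k^{>++} = {(a,b) ∈ ℝ⁺×ℝ⁺ : Φ_k^>(a,b)(T₁) = T₂}`. -/
def CGt (uM uN : ℝ → ℝ → ℝ → ℝ) (T₁ T₂ : ℝ) (k : ℕ) : Set (ℝ × ℝ) :=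
  {ab | 0 < ab.1 ∧ 0 < ab.2 ∧ PhiGt uM uN ab.1 ab.2 k (T₁ : EReal) = (T₂ : EReal)}

/-- `C_k^{<++} = {(a,b) ∈ ℝ⁺×ℝ⁺ : Φ_k^<(a,b)(T₁) = T₂}`. -/
def CLt (uM uN : ℝ → ℝ → ℝ → ℝ) (T₁ T₂ : ℝ) (k : ℕ) : Set (ℝ × ℝ) :=
  {ab | 0 < ab.1 ∧ 0 < ab.2 ∧ PhiLt uM uN ab.1 ab.2 k (T₁ : EReal) = (T₂ : EReal)}

section helpers

variable {p q w : ℝ → ℝ} {u u' : ℝ → ℝ → ℝ → ℝ}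

/-- Derivative facts for the first order system. -/
lemma sol_du (hppos : ∀ t, 0 < p t) (hS : IsSolFamily p q w u u') (c s t : ℝ) :
    HasDerivAt (u c s) ((p t * u' c s t) / p t) t := by
  have h := ((hS c s).2.2 t).1
  rwa [mul_div_cancel_left₀ _ (hppos t).ne']

lemma sol_dU (hS : IsSolFamily p q w u u') (c s t : ℝ) :
    HasDerivAt (fun τ => p τ * u' c s τ) ((q t - c * w t) * u c s t) t := by
  have h := ((hS c s).2.2 t).2
  convert h using 1
  ring

lemma sol_U0 (hppos : ∀ t, 0 < p t) (hS : IsSolFamily p q w u u') (c s : ℝ) :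
    p s * u' c s s = 1 := by
  rw [(hS c s).2.1]
  have := (hppos s).ne'
  field_simp

lemma sol_cu (hS : IsSolFamily p q w u u') (c s : ℝ) : Continuous (u c s) :=
  continuous_iff_continuousAt.2 fun t => ((hS c s).2.2 t).1.continuousAt

lemma sol_cU (hS : IsSolFamily p q w u u') (c s : ℝ) : Continuous (fun τ => p τ * u' c s τ) :=
  continuous_iff_continuousAt.2 fun t => ((hS c s).2.2 t).2.continuousAt

/-- If the quasi-derivative is positive on `[s, r)` then `u` is positive on `(s, r]`. -/
lemma sol_pos_of_U (hppos : ∀ t, 0 < p t) (hS : IsSolFamily p q w u u') (c s r : ℝ)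
    (hU : ∀ t, s < t → t < r → 0 < p t * u' c s t) : ∀ t, s < t → t ≤ r → 0 < u c s t := by
  intro t hst htr
  have hmono : StrictMonoOn (u c s) (Icc s t) := by
    apply strictMonoOn_of_deriv_pos (convex_Icc s t) (sol_cu hS c s).continuousOn
    intro x hx
    rw [interior_Icc] at hx
    rw [(sol_du hppos hS c s x).deriv]
    exact div_pos (hU x hx.1 (hx.2.trans_le htr)) (hppos x)
  have := hmono (left_mem_Icc.2 hst.le) (right_mem_Icc.2 hst.le) hst
  rwa [(hS c s).1] at this

lemma sol_pos_near (hppos : ∀ t, 0 < p t) (hS : IsSolFamily p q w u u') (c s : ℝ) :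
    ∃ r, s < r ∧ ∀ t, s < t → t ≤ r → 0 < u c s t := by
  have h1 : ∀ᶠ t in nhds s, 0 < p t * u' c s t := by
    apply (sol_cU hS c s).continuousAt.eventually (lt_mem_nhds _)
    show 0 < p s * u' c s s
    rw [sol_U0 hppos hS]; norm_num
  obtain ⟨d, hd, h⟩ := Metric.eventually_nhds_iff.1 h1
  refine ⟨s + d, by linarith, sol_pos_of_U hppos hS c s _ ?_⟩
  intro t h1 h2
  apply h
  rw [Real.dist_eq, abs_lt]; constructor <;> linarith

lemma phiE_cases (hppos : ∀ t, 0 < p t) (hS : IsSolFamily p q w u u') (c s : ℝ) :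
    (phiE u c s = ⊤ ∧ ∀ t, s < t → 0 < u c s t) ∨
    ∃ z : ℝ, s < z ∧ phiE u c s = (z : EReal) ∧ u c s z = 0 ∧ ∀ t, s < t → t < z → 0 < u c s t := by
  obtain ⟨r, hr, hpos⟩ := sol_pos_near hppos hS c s
  -- positivity on an interval without zeros
  have key : ∀ T, (∀ t, s < t → t ≤ T → u c s t ≠ 0) → s < T → 0 < u c s T := by
    intro T hT hsT
    by_contra hcon
    push Not at hcon
    have hrT : r < T := by
      by_contra h
      exact absurd (hpos T hsT (not_lt.1 h)) (not_lt.2 hcon)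
    have := intermediate_value_Icc' hrT.le (sol_cu hS c s).continuousOn
    obtain ⟨x, hx, hx0⟩ := this ⟨hcon, (hpos r hr le_rfl).le⟩
    exact hT x (hr.trans_le hx.1) hx.2 hx0
  by_cases hne : (zeroSet u c s).Nonempty
  · right
    have hbdd : BddBelow (zeroSet u c s) := ⟨s, fun t ht => ht.1.le⟩
    have heq : zeroSet u c s = Ici r ∩ {t | u c s t = 0} := by
      ext t
      simp only [zeroSet, mem_ofPred_eq, mem_inter_iff, mem_Ici]
      constructor
      · rintro ⟨h1, h2⟩
        refine ⟨?_, h2⟩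
        by_contra h
        have := hpos t h1 (not_le.1 h).le
        linarith
      · rintro ⟨h1, h2⟩
        exact ⟨hr.trans_le h1, h2⟩
    have hcl : IsClosed (zeroSet u c s) := by
      rw [heq]
      exact isClosed_Ici.inter (isClosed_eq (sol_cu hS c s) continuous_const)
    have hmem := hcl.csInf_mem hne hbdd
    refine ⟨sInf (zeroSet u c s), hmem.1, by rw [phiE, if_pos hne], hmem.2, ?_⟩
    intro t h1 h2
    apply key t _ h1
    intro x hx1 hx2 hx3
    exact absurd (csInf_le hbdd (show x ∈ zeroSet u c s from ⟨hx1, hx3⟩)) (by linarith)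
  · left
    refine ⟨by rw [phiE, if_neg hne], fun t ht => key t ?_ ht⟩
    intro x hx1 _ hx3
    exact hne ⟨x, hx1, hx3⟩

lemma lt_phiE_iff (hppos : ∀ t, 0 < p t) (hS : IsSolFamily p q w u u') (c s T : ℝ) :
    (T : EReal) < phiE u c s ↔ ∀ t, s < t → t ≤ T → 0 < u c s t := by
  rcases phiE_cases hppos hS c s with ⟨h1, h2⟩ | ⟨z, hsz, h1, h2, h3⟩
  · rw [h1]
    exact ⟨fun _ t ht _ => h2 t ht, fun _ => EReal.coe_lt_top T⟩
  · rw [h1, EReal.coe_lt_coe_iff]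
    constructor
    · intro hT t ht htT
      exact h3 t ht (htT.trans_lt hT)
    · intro h
      by_contra hc
      have := h z hsz (not_lt.1 hc)
      linarith

lemma lt_phiE_self (hppos : ∀ t, 0 < p t) (hS : IsSolFamily p q w u u') (c s : ℝ) :
    (s : EReal) < phiE u c s := by
  rw [lt_phiE_iff hppos hS]
  intro t h1 h2
  linarith

/-- local bounds for the coefficients -/
lemma coeff_bound {f : ℝ → ℝ} (hf : Continuous f) (A B : ℝ) :
    ∃ C, 1 ≤ C ∧ ∀ t, A ≤ t → t ≤ B → |f t| ≤ C := by
  obtain ⟨C, hC⟩ := (isCompact_Icc (a := A) (b := B)).exists_bound_of_continuousOn hf.continuousOn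
  exact ⟨max C 1, le_max_right _ _, fun t h1 h2 => (hC t ⟨h1, h2⟩).trans (le_max_left _ _)⟩

/-- A nontrivial solution has no double zero. -/
lemma sol_no_double (hp : Continuous p) (hq : Continuous q) (hw : Continuous w)
    (hppos : ∀ t, 0 < p t) (hS : IsSolFamily p q w u u') (c s z : ℝ) (hsz : s < z)
    (h0 : u c s z = 0) : p z * u' c s z ≠ 0 := by
  intro h1
  obtain ⟨C1, hC1, hb1⟩ := coeff_bound (f := fun t => (p t)⁻¹)
    (hp.inv₀ fun t => (hppos t).ne') s z
  obtain ⟨C2, hC2, hb2⟩ := coeff_bound (f := fun t => q t - c * w t) (by fun_prop) s z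
  let Y : ℝ → ℝ × ℝ := fun t => (u c s (-t), p (-t) * u' c s (-t))
  let Y' : ℝ → ℝ × ℝ := fun t =>
    (((p (-t) * u' c s (-t)) / p (-t)) * (-1), ((q (-t) - c * w (-t)) * u c s (-t)) * (-1))
  have hd : ∀ t, HasDerivAt Y (Y' t) t := by
    intro t
    have e1 := (sol_du hppos hS c s (-t)).comp t (hasDerivAt_neg t)
    have e2 := (sol_dU hS c s (-t)).comp t (hasDerivAt_neg t)
    exact e1.prodMk e2
  have hY := eq_zero_of_abs_deriv_le_mul_abs_self_of_eq_zero_right (f := Y) (f' := Y')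
    (K := C1 + C2) (a := -z) (b := -s)
    (fun t _ => (hd t).continuousAt.continuousWithinAt)
    (fun t _ => (hd t).hasDerivWithinAt)
    (by simp only [Y, neg_neg, h0, h1]; rfl)
    (by
      intro t ht
      have b1 := hb1 (-t) (by linarith [ht.2]) (by linarith [ht.1])
      have b2 := hb2 (-t) (by linarith [ht.2]) (by linarith [ht.1])
      have n1 : ‖(Y t).1‖ ≤ ‖Y t‖ := norm_fst_le _
      have n2 : ‖(Y t).2‖ ≤ ‖Y t‖ := norm_snd_le _
      have n0 : 0 ≤ ‖Y t‖ := norm_nonneg _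
      have key1 : ‖(Y' t).1‖ ≤ (C1 + C2) * ‖Y t‖ := by
        have : ‖(Y' t).1‖ = ‖(Y t).2‖ * |(p (-t))⁻¹| := by
          simp only [Y, Y', Real.norm_eq_abs, div_eq_mul_inv]
          rw [abs_mul, abs_mul, abs_neg, abs_one, mul_one]
        rw [this]
        calc _ ≤ ‖Y t‖ * C1 := by gcongr
          _ ≤ _ := by nlinarith
      have key2 : ‖(Y' t).2‖ ≤ (C1 + C2) * ‖Y t‖ := by
        have : ‖(Y' t).2‖ = |q (-t) - c * w (-t)| * ‖(Y t).1‖ := by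
          simp only [Y, Y', Real.norm_eq_abs]
          rw [abs_mul, abs_mul, abs_neg, abs_one, mul_one]
        rw [this]
        calc _ ≤ C2 * ‖Y t‖ := by gcongr
          _ ≤ _ := by nlinarith
      exact max_le key1 key2)
    (-s) ⟨by linarith, le_rfl⟩
  have h2 : p s * u' c s s = 0 := by
    have := congrArg Prod.snd hY
    simpa [Y] using this
  rw [sol_U0 hppos hS] at h2
  norm_num at h2

/-- Continuous dependence on parameter and initial point. -/
lemma sol_cont (hp : Continuous p) (hq : Continuous q) (hw : Continuous w)
    (hppos : ∀ t, 0 < p t) (hS : IsSolFamily p q w u u') (c₀ s₀ B ε : ℝ) (hε : 0 < ε) :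
    ∃ η > 0, ∀ c s, |c - c₀| < η → |s - s₀| < η → ∀ t, s ≤ t → t ≤ B →
      |u c s t - u c₀ s₀ t| < ε ∧ |p t * u' c s t - p t * u' c₀ s₀ t| < ε := by
  obtain ⟨C1, hC1, hb1⟩ := coeff_bound (f := fun t => (p t)⁻¹)
    (hp.inv₀ fun t => (hppos t).ne') (s₀ - 1) B
  obtain ⟨C2, hC2, hb2⟩ := coeff_bound hq (s₀ - 1) B
  obtain ⟨C3, hC3, hb3⟩ := coeff_bound hw (s₀ - 1) B
  obtain ⟨C4, hC4, hb4⟩ := coeff_bound (sol_cu hS c₀ s₀) (s₀ - 1) B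
  set K : ℝ := C1 + (C2 + (|c₀| + 1) * C3) with hK
  have hK1 : 1 ≤ K := by
    have : 0 ≤ (|c₀| + 1) * C3 := by positivity
    linarith
  -- the Gronwall constant
  set E : ℝ := Real.exp (K * (|B - s₀| + 1)) with hE
  have hE1 : 1 ≤ E := Real.one_le_exp (by positivity)
  set δ : ℝ := ε / (4 * E) with hδ
  have hδp : 0 < δ := by positivity
  have ev1 : ∀ᶠ s in nhds s₀, |u c₀ s₀ s| < δ := by
    have : Continuous fun s => |u c₀ s₀ s| := (sol_cu hS c₀ s₀).abs
    apply this.continuousAt.eventually (gt_mem_nhds _)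
    show |u c₀ s₀ s₀| < δ
    rw [(hS c₀ s₀).1]; simpa using hδp
  have ev2 : ∀ᶠ s in nhds s₀, |1 - p s * u' c₀ s₀ s| < δ := by
    have : Continuous fun s => |1 - p s * u' c₀ s₀ s| :=
      (continuous_const.sub (sol_cU hS c₀ s₀)).abs
    apply this.continuousAt.eventually (gt_mem_nhds _)
    show |1 - p s₀ * u' c₀ s₀ s₀| < δ
    rw [sol_U0 hppos hS]; simpa using hδp
  obtain ⟨d, hd, hnear⟩ := Metric.eventually_nhds_iff.1 (ev1.and ev2)
  set η : ℝ := min (min d 1) (δ / (C3 * C4)) with hη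
  have hηp : 0 < η := by positivity
  refine ⟨η, hηp, ?_⟩
  intro c s hc hs t hst htB
  have hs1 : |s - s₀| < 1 := hs.trans_le ((min_le_left _ _).trans (min_le_right _ _))
  have hc1 : |c - c₀| < 1 := hc.trans_le ((min_le_left _ _).trans (min_le_right _ _))
  have hsd : |s - s₀| < d := hs.trans_le ((min_le_left _ _).trans (min_le_left _ _))
  have hcd : |c - c₀| * (C3 * C4) ≤ δ := by
    have : |c - c₀| ≤ δ / (C3 * C4) := hc.le.trans (min_le_right _ _)
    rwa [le_div_iff₀ (by positivity)] at this
  obtain ⟨i1, i2⟩ := hnear (y := s) (by rwa [Real.dist_eq])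
  have hsA : s₀ - 1 ≤ s := by linarith [(abs_lt.1 hs1).1]
  let D : ℝ → ℝ × ℝ := fun t =>
    (u c s t - u c₀ s₀ t, p t * u' c s t - p t * u' c₀ s₀ t)
  let D' : ℝ → ℝ × ℝ := fun t =>
    ((p t * u' c s t) / p t - (p t * u' c₀ s₀ t) / p t,
      (q t - c * w t) * u c s t - (q t - c₀ * w t) * u c₀ s₀ t)
  have hDd : ∀ t, HasDerivAt D (D' t) t := fun t =>
    ((sol_du hppos hS c s t).sub (sol_du hppos hS c₀ s₀ t)).prodMk
      ((sol_dU hS c s t).sub (sol_dU hS c₀ s₀ t))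
  have hcabs : |c| ≤ |c₀| + 1 := by
    have := abs_sub_abs_le_abs_sub c c₀
    linarith
  have hG := norm_le_gronwallBound_of_norm_deriv_right_le (f := D) (f' := D') (δ := δ) (K := K)
    (ε := δ) (a := s) (b := B)
    (fun t _ => (hDd t).continuousAt.continuousWithinAt)
    (fun t _ => (hDd t).hasDerivWithinAt)
    (by
      refine max_le ?_ ?_
      · simp only [D, Real.norm_eq_abs, (hS c s).1, zero_sub, abs_neg]
        exact i1.le
      · simp only [D, Real.norm_eq_abs, sol_U0 hppos hS c s]
        exact i2.le)
    (by
      intro t ht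
      have b1 := hb1 t (by linarith [ht.1]) ht.2.le
      have b2 := hb2 t (by linarith [ht.1]) ht.2.le
      have b3 := hb3 t (by linarith [ht.1]) ht.2.le
      have b4 := hb4 t (by linarith [ht.1]) ht.2.le
      have n1 : |u c s t - u c₀ s₀ t| ≤ ‖D t‖ := norm_fst_le (D t)
      have n2 : |p t * u' c s t - p t * u' c₀ s₀ t| ≤ ‖D t‖ := norm_snd_le (D t)
      have n0 : 0 ≤ ‖D t‖ := norm_nonneg _
      refine max_le ?_ ?_
      · have e : (D' t).1 = (p t * u' c s t - p t * u' c₀ s₀ t) * (p t)⁻¹ := by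
          simp only [D', div_eq_mul_inv]; ring
        rw [e, Real.norm_eq_abs, abs_mul]
        calc _ ≤ ‖D t‖ * C1 := by gcongr
          _ ≤ K * ‖D t‖ + δ := by
            have : 0 ≤ (C2 + (|c₀| + 1) * C3) * ‖D t‖ := by positivity
            rw [hK]; linarith
      · have e : (D' t).2 = (q t - c * w t) * (u c s t - u c₀ s₀ t)
            - (c - c₀) * (w t * u c₀ s₀ t) := by
          simp only [D']; ring
        rw [e, Real.norm_eq_abs]
        have f1 : |q t - c * w t| ≤ C2 + (|c₀| + 1) * C3 := by
          calc |q t - c * w t| ≤ |q t| + |c * w t| := abs_sub _ _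
            _ = |q t| + |c| * |w t| := by rw [abs_mul]
            _ ≤ _ := by gcongr
        have f2 : |(c - c₀) * (w t * u c₀ s₀ t)| ≤ δ := by
          rw [abs_mul, abs_mul]
          calc _ ≤ |c - c₀| * (C3 * C4) := by gcongr
            _ ≤ δ := hcd
        calc _ ≤ |(q t - c * w t) * (u c s t - u c₀ s₀ t)| + |(c - c₀) * (w t * u c₀ s₀ t)| :=
              abs_sub _ _
          _ ≤ (C2 + (|c₀| + 1) * C3) * ‖D t‖ + δ := by
              rw [abs_mul]; gcongr
          _ ≤ K * ‖D t‖ + δ := by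
              have : 0 ≤ C1 * ‖D t‖ := by positivity
              rw [hK]; linarith)
    t ⟨hst, htB⟩
  have hfin : gronwallBound δ K δ (t - s) < ε := by
    rw [gronwallBound_of_K_ne_0 (by linarith)]
    have hx : t - s ≤ |B - s₀| + 1 := by
      have := (abs_lt.1 hs1).1
      have := le_abs_self (B - s₀)
      linarith
    have hEx : Real.exp (K * (t - s)) ≤ E := by
      rw [hE]; apply Real.exp_le_exp.2
      exact mul_le_mul_of_nonneg_left hx (by linarith)
    have h1x : 1 ≤ Real.exp (K * (t - s)) :=
      Real.one_le_exp (mul_nonneg (by linarith) (by linarith))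
    have hδK : δ / K ≤ δ := div_le_self hδp.le hK1
    have hδE : δ * E = ε / 4 := by rw [hδ]; field_simp
    have : δ / K * (Real.exp (K * (t - s)) - 1) ≤ δ * E := by
      apply mul_le_mul hδK (by linarith) (by linarith) hδp.le
    have : δ * Real.exp (K * (t - s)) ≤ δ * E := by gcongr
    show δ * Real.exp (K * (t - s)) + δ / K * (Real.exp (K * (t - s)) - 1) < ε
    linarith
  exact ⟨(norm_fst_le (D t)).trans_lt (hG.trans_lt hfin),
    (norm_snd_le (D t)).trans_lt (hG.trans_lt hfin)⟩

lemma phiE_lsc (hp : Continuous p) (hq : Continuous q) (hw : Continuous w)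
    (hppos : ∀ t, 0 < p t) (hS : IsSolFamily p q w u u') (c₀ s₀ T : ℝ)
    (h : (T : EReal) < phiE u c₀ s₀) :
    ∃ η > 0, ∀ c s, |c - c₀| < η → |s - s₀| < η → (T : EReal) < phiE u c s := by
  rw [lt_phiE_iff hppos hS] at h
  have h1 : ∀ᶠ t in nhds s₀, 1 / 2 < p t * u' c₀ s₀ t := by
    apply (sol_cU hS c₀ s₀).continuousAt.eventually (lt_mem_nhds _)
    show 1 / 2 < p s₀ * u' c₀ s₀ s₀
    rw [sol_U0 hppos hS]; norm_num
  obtain ⟨d, hd, hU⟩ := Metric.eventually_nhds_iff.1 h1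
  -- a positive lower bound on the compact part
  obtain ⟨μ, hμ, hμb⟩ : ∃ μ > 0, ∀ t, s₀ + d / 2 ≤ t → t ≤ T → μ ≤ u c₀ s₀ t := by
    by_cases hne : s₀ + d / 2 ≤ T
    · obtain ⟨x, hx, hxm⟩ := (isCompact_Icc (a := s₀ + d / 2) (b := T)).exists_isMinOn
        ⟨_, left_mem_Icc.2 hne⟩ (sol_cu hS c₀ s₀).continuousOn
      exact ⟨u c₀ s₀ x, h x (by linarith [hx.1]) hx.2, fun t h1 h2 => hxm ⟨h1, h2⟩⟩
    · exact ⟨1, one_pos, fun t h1 h2 => absurd (h1.trans h2) hne⟩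
  obtain ⟨η, hη, hc⟩ := sol_cont hp hq hw hppos hS c₀ s₀ (max T (s₀ + d / 2)) (min μ (1 / 2))
    (by positivity)
  refine ⟨min η (d / 2), by positivity, ?_⟩
  intro c s hcc hss
  have hcc' := hcc.trans_le (min_le_left _ _)
  have hss' := hss.trans_le (min_le_left _ _)
  have hsd := abs_lt.1 (hss.trans_le (min_le_right _ _))
  rw [lt_phiE_iff hppos hS]
  intro t hst htT
  rcases le_total t (s₀ + d / 2) with ht | ht
  · refine sol_pos_of_U hppos hS c s (s₀ + d / 2) ?_ t hst ht
    intro x hx1 hx2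
    have e1 := (hc c s hcc' hss' x hx1.le (hx2.le.trans (le_max_right _ _))).2
    have e2 := hU (y := x) (by rw [Real.dist_eq, abs_lt]; constructor <;> linarith)
    have e3 := (abs_lt.1 (e1.trans_le (min_le_right _ _))).1
    linarith
  · have e1 := (hc c s hcc' hss' t hst.le (htT.trans (le_max_left _ _))).1
    have e3 := (abs_lt.1 (e1.trans_le (min_le_left _ _))).1
    have := hμb t ht htT
    linarith

lemma phiE_usc (hp : Continuous p) (hq : Continuous q) (hw : Continuous w)
    (hppos : ∀ t, 0 < p t) (hS : IsSolFamily p q w u u') (c₀ s₀ : ℝ) (T : EReal)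
    (h : phiE u c₀ s₀ < T) :
    ∃ η > 0, ∀ c s, |c - c₀| < η → |s - s₀| < η → phiE u c s < T := by
  rcases phiE_cases hppos hS c₀ s₀ with ⟨h1, h2⟩ | ⟨z, hsz, h1, h2, h3⟩
  · rw [h1] at h; exact absurd h not_top_lt
  rw [h1] at h
  obtain ⟨r, hzr, hrT⟩ := EReal.lt_iff_exists_real_btwn.1 h
  rw [EReal.coe_lt_coe_iff] at hzr
  have hd := sol_du hppos hS c₀ s₀ z
  have hne := sol_no_double hp hq hw hppos hS c₀ s₀ z hsz h2
  -- the quasi-derivative at the first zero is negative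
  have hneg : p z * u' c₀ s₀ z < 0 := by
    by_contra hcon
    have hpos : 0 < (p z * u' c₀ s₀ z) / p z :=
      div_pos (lt_of_le_of_ne (not_lt.1 hcon) hne.symm) (hppos z)
    have hsl := (hasDerivAt_iff_tendsto_slope.1 hd).eventually (lt_mem_nhds hpos)
    have hsl' : ∀ᶠ x in nhdsWithin z (Iio z), 0 < slope (u c₀ s₀) z x :=
      hsl.filter_mono (nhdsWithin_mono _ fun x hx => ne_of_lt hx)
    have hI : ∀ᶠ x in nhdsWithin z (Iio z), x ∈ Ioo s₀ z := Ioo_mem_nhdsLT hsz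
    obtain ⟨x, hx1, hx2⟩ := (hsl'.and hI).exists
    rw [slope_def_field, h2, sub_zero] at hx1
    have := h3 x hx2.1 hx2.2
    exact absurd hx1 (not_lt.2 (div_nonpos_of_nonneg_of_nonpos this.le (by linarith [hx2.2])))
  obtain ⟨x, hx1, hx2, hx3⟩ : ∃ x, z < x ∧ x < r ∧ u c₀ s₀ x < 0 := by
    have hneg' : (p z * u' c₀ s₀ z) / p z < 0 := div_neg_of_neg_of_pos hneg (hppos z)
    have hsl := (hasDerivAt_iff_tendsto_slope.1 hd).eventually (gt_mem_nhds hneg')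
    have hsl' : ∀ᶠ x in nhdsWithin z (Ioi z), slope (u c₀ s₀) z x < 0 :=
      hsl.filter_mono (nhdsWithin_mono _ fun x hx => ne_of_gt hx)
    have hI : ∀ᶠ x in nhdsWithin z (Ioi z), x ∈ Ioo z r := Ioo_mem_nhdsGT hzr
    obtain ⟨x, hx1, hx2⟩ := (hsl'.and hI).exists
    refine ⟨x, hx2.1, hx2.2, ?_⟩
    rw [slope_def_field, h2, sub_zero] at hx1
    by_contra hcon
    exact absurd hx1 (not_lt.2 (div_nonneg (not_lt.1 hcon) (by linarith [hx2.1])))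
  obtain ⟨η, hη, hc⟩ := sol_cont hp hq hw hppos hS c₀ s₀ x (-(u c₀ s₀ x)) (by linarith)
  refine ⟨min η (x - s₀), lt_min hη (by linarith), ?_⟩
  intro c s hcc hss
  have hcc' := hcc.trans_le (min_le_left _ _)
  have hss' := hss.trans_le (min_le_left _ _)
  have hsd := abs_lt.1 (hss.trans_le (min_le_right _ _))
  have e1 := (abs_lt.1 (hc c s hcc' hss' x (by linarith) le_rfl).1).2
  by_contra hcon
  have hlt : (x : EReal) < phiE u c s :=
    (EReal.coe_lt_coe_iff.2 hx2).trans (hrT.trans_le (not_lt.1 hcon))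
  have := (lt_phiE_iff hppos hS c s x).1 hlt x (by linarith) le_rfl
  linarith

lemma phiStep_coe (c s : ℝ) : phiStep u c (s : EReal) = phiE u c s := by
  simp [phiStep]

lemma phiStep_top (c : ℝ) : phiStep u c ⊤ = ⊤ := by
  simp [phiStep]

lemma le_phiStep (hppos : ∀ t, 0 < p t) (hS : IsSolFamily p q w u u') (c : ℝ) (x : EReal) :
    x ≤ phiStep u c x := by
  induction x with
  | bot => exact bot_le
  | top => rw [phiStep_top]
  | coe s => rw [phiStep_coe]; exact (lt_phiE_self hppos hS c s).le

lemma phiStep_cont (hp : Continuous p) (hq : Continuous q) (hw : Continuous w)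
    (hppos : ∀ t, 0 < p t) (hS : IsSolFamily p q w u u') (c : ℝ) (x : EReal) (hx : x ≠ ⊥) :
    ContinuousAt (fun y : ℝ × EReal => phiStep u y.1 y.2) (c, x) := by
  induction x with
  | bot => exact absurd rfl hx
  | top =>
    show Tendsto _ _ (nhds (phiStep u c ⊤))
    rw [phiStep_top]
    refine tendsto_nhds_top_mono (f := fun y : ℝ × EReal => y.2) ?_ ?_
    · exact continuousAt_snd
    · exact Eventually.of_forall fun y => le_phiStep hppos hS y.1 y.2
  | coe s =>
    have hev : ∀ P : ℝ × EReal → Prop,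
        (∃ η > 0, ∀ c' s' : ℝ, |c' - c| < η → |s' - s| < η → P (c', (s' : EReal))) →
        ∀ᶠ y in nhds (c, (s : EReal)), P y := by
      rintro P ⟨η, hη, h⟩
      rw [nhds_prod_eq, EReal.nhds_coe]
      have h1 : ∀ᶠ c' in nhds c, |c' - c| < η := by
        filter_upwards [Metric.ball_mem_nhds c hη] with y hy
        rwa [Metric.mem_ball, Real.dist_eq] at hy
      have h2 : ∀ᶠ y in Filter.map (fun r : ℝ => (r : EReal)) (nhds s),
          ∃ s' : ℝ, (s' : EReal) = y ∧ |s' - s| < η := by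
        rw [eventually_map]
        filter_upwards [Metric.ball_mem_nhds s hη] with y hy
        rw [Metric.mem_ball, Real.dist_eq] at hy
        exact ⟨y, rfl, hy⟩
      filter_upwards [h1.prod_mk h2]
      rintro ⟨c', y⟩ ⟨k1, s', rfl, k2⟩
      exact h c' s' k1 k2
    show Tendsto _ _ (nhds (phiStep u c (s : EReal)))
    rw [phiStep_coe]
    apply tendsto_order.2
    constructor
    · intro L hL
      obtain ⟨T, hLT, hT⟩ := EReal.lt_iff_exists_real_btwn.1 hL
      apply hev
      obtain ⟨η, hη, h⟩ := phiE_lsc hp hq hw hppos hS c s T hT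
      refine ⟨η, hη, fun c' s' k1 k2 => ?_⟩
      show L < phiStep u c' (s' : EReal)
      rw [phiStep_coe]
      exact hLT.trans (h c' s' k1 k2)
    · intro L hL
      apply hev
      obtain ⟨η, hη, h⟩ := phiE_usc hp hq hw hppos hS c s L hL
      refine ⟨η, hη, fun c' s' k1 k2 => ?_⟩
      show phiStep u c' (s' : EReal) < L
      rw [phiStep_coe]
      exact h c' s' k1 k2

/-- With `c = 0` there is no zero. -/
lemma phiE_zero (hppos : ∀ t, 0 < p t) (hqnn : ∀ t, 0 ≤ q t)
    (hS : IsSolFamily p q w u u') (s : ℝ) : phiE u 0 s = ⊤ := by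
  rcases phiE_cases hppos hS 0 s with ⟨h1, h2⟩ | ⟨z, hsz, h1, h2, h3⟩
  · exact h1
  exfalso
  have hmono : MonotoneOn (fun τ => p τ * u' 0 s τ) (Icc s z) := by
    apply monotoneOn_of_deriv_nonneg (convex_Icc s z) (sol_cU hS 0 s).continuousOn
    · intro x _
      exact (sol_dU hS 0 s x).differentiableAt.differentiableWithinAt
    · intro x hx
      rw [interior_Icc] at hx
      rw [(sol_dU hS 0 s x).deriv]
      have := h3 x hx.1 hx.2
      have := hqnn x
      rw [zero_mul, sub_zero]
      positivity
  have := sol_pos_of_U hppos hS 0 s z (by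
    intro t h1 h2
    have := hmono (left_mem_Icc.2 hsz.le) ⟨h1.le, h2.le⟩ h1.le
    simp only [sol_U0 hppos hS] at this
    linarith) z hsz le_rfl
  linarith

/-- Sturm separation: the zero function is strictly increasing. -/
lemma phiE_strict (hppos : ∀ t, 0 < p t) (hS : IsSolFamily p q w u u') (c s s' : ℝ)
    (hss : s < s') : phiE u c s' = ⊤ ∨ phiE u c s < phiE u c s' := by
  rcases phiE_cases hppos hS c s' with ⟨h1, h2⟩ | ⟨z, hsz, h1, h2, h3⟩
  · exact Or.inl h1
  right
  by_contra hcon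
  rw [h1] at hcon
  have hge := not_lt.1 hcon
  have hpos : ∀ t, s < t → t < z → 0 < u c s t := fun t k1 k2 =>
    (lt_phiE_iff hppos hS c s t).1 ((EReal.coe_lt_coe_iff.2 k2).trans_le hge) t k1 le_rfl
  have hvz : 0 ≤ u c s z := by
    apply ge_of_tendsto ((sol_cu hS c s).continuousAt.continuousWithinAt (s := Iio z) (x := z))
    filter_upwards [Ioo_mem_nhdsLT (hss.trans hsz)] with x hx
    exact (hpos x hx.1 hx.2).le
  have huz : p z * u' c s' z ≤ 0 := by
    by_contra hc
    have hd := sol_du hppos hS c s' z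
    have hpos' : 0 < (p z * u' c s' z) / p z := div_pos (not_le.1 hc) (hppos z)
    have hsl := (hasDerivAt_iff_tendsto_slope.1 hd).eventually (lt_mem_nhds hpos')
    have hsl' : ∀ᶠ x in nhdsWithin z (Iio z), 0 < slope (u c s') z x :=
      hsl.filter_mono (nhdsWithin_mono _ fun x hx => ne_of_lt hx)
    have hI : ∀ᶠ x in nhdsWithin z (Iio z), x ∈ Ioo s' z := Ioo_mem_nhdsLT hsz
    obtain ⟨x, hx1, hx2⟩ := (hsl'.and hI).exists
    rw [slope_def_field, h2, sub_zero] at hx1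
    have := h3 x hx2.1 hx2.2
    exact absurd hx1 (not_lt.2 (div_nonpos_of_nonneg_of_nonpos this.le (by linarith [hx2.2])))
  have hW : ∀ t, HasDerivAt (fun t => u c s t * (p t * u' c s' t) - u c s' t * (p t * u' c s t))
      0 t := by
    intro t
    have := ((sol_du hppos hS c s t).mul (sol_dU hS c s' t)).sub
      ((sol_du hppos hS c s' t).mul (sol_dU hS c s t))
    refine this.congr_deriv ?_
    ring
  have hconst := is_const_of_deriv_eq_zero (fun t => (hW t).differentiableAt)
    (fun t => (hW t).deriv) s' z
  simp only [sol_U0 hppos hS, (hS c s').1, h2] at hconst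
  have := hpos s' hss hsz
  nlinarith [mul_nonpos_of_nonneg_of_nonpos hvz huz]

/-- Sturm–Picone comparison: the zero function is nonincreasing in the parameter. -/
lemma phiE_anti (hppos : ∀ t, 0 < p t) (hqnn : ∀ t, 0 ≤ q t) (hS : IsSolFamily p q w u u')
    (c d s : ℝ) (hc : 0 < c) (hcd : c ≤ d) : phiE u d s ≤ phiE u c s := by
  rcases hcd.eq_or_lt with rfl | hcd
  · exact le_rfl
  have hd : 0 < d := hc.trans hcd
  rcases phiE_cases hppos hS c s with ⟨h1, h2⟩ | ⟨z, hsz, h1, h2, h3⟩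
  · rw [h1]; exact le_top
  by_contra hcon
  rw [h1] at hcon
  have hv := (lt_phiE_iff hppos hS d s z).1 (not_le.1 hcon)
  -- Picone function
  let G : ℝ → ℝ := fun t => u c s t * (p t * u' c s t) / c
    - (u c s t) ^ 2 * (p t * u' d s t) / (d * u d s t)
  have hGd : ∀ t, s < t → t ≤ z → HasDerivAt G
      ((p t * u' c s t) ^ 2 / p t * (1 / c - 1 / d) + q t * (u c s t) ^ 2 * (1 / c - 1 / d)
        + 1 / (p t * d) * (p t * u' c s t - u c s t * (p t * u' d s t) / u d s t) ^ 2) t := by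
    intro t k1 k2
    have hvt := (hv t k1 k2).ne'
    have hpt := (hppos t).ne'
    have e1 := ((sol_du hppos hS c s t).mul (sol_dU hS c s t)).div_const c
    have e2 := (((sol_du hppos hS c s t).pow 2).mul (sol_dU hS d s t)).div
      ((sol_du hppos hS d s t).const_mul d) (mul_ne_zero hd.ne' hvt)
    have e3 := e1.sub e2
    refine e3.congr_deriv ?_
    simp only [Pi.mul_apply, Pi.pow_apply]
    generalize u c s t = U at *
    generalize u d s t = V at *
    generalize u' c s t = U1 at *
    generalize u' d s t = V1 at *
    generalize p t = P at *
    have := hc.ne'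
    have := hd.ne'
    field_simp
    ring
  have hcdpos : 0 < 1 / c - 1 / d := by
    rw [sub_pos]; exact one_div_lt_one_div_of_lt hc hcd
  have hGnn : ∀ t, s < t → t ≤ z →
      (p t * u' c s t) ^ 2 / p t * (1 / c - 1 / d) ≤
      ((p t * u' c s t) ^ 2 / p t * (1 / c - 1 / d) + q t * (u c s t) ^ 2 * (1 / c - 1 / d)
        + 1 / (p t * d) * (p t * u' c s t - u c s t * (p t * u' d s t) / u d s t) ^ 2) := by
    intro t _ _
    have := hqnn t
    have := hppos t
    have a1 : 0 ≤ q t * (u c s t) ^ 2 * (1 / c - 1 / d) := by positivity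
    have a2 : 0 ≤ 1 / (p t * d) *
      (p t * u' c s t - u c s t * (p t * u' d s t) / u d s t) ^ 2 := by positivity
    linarith
  have hGmono : MonotoneOn G (Ioc s z) := by
    apply monotoneOn_of_deriv_nonneg (convex_Ioc s z)
    · intro x hx
      exact (hGd x hx.1 hx.2).continuousAt.continuousWithinAt
    · intro x hx
      rw [interior_Ioc] at hx
      exact (hGd x hx.1 hx.2.le).differentiableAt.differentiableWithinAt
    · intro x hx
      rw [interior_Ioc] at hx
      rw [(hGd x hx.1 hx.2.le).deriv]
      refine le_trans ?_ (hGnn x hx.1 hx.2.le)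
      have := hppos x
      positivity
  have hGz : G z = 0 := by simp [G, h2]
  have hlim : Tendsto G (nhdsWithin s (Ioi s)) (nhds 0) := by
    have hslope : ∀ e, Tendsto (slope (u e s) s) (nhdsWithin s (Ioi s)) (nhds (1 / p s)) := by
      intro e
      have := hasDerivAt_iff_tendsto_slope.1 (sol_du hppos hS e s s)
      rw [sol_U0 hppos hS] at this
      exact this.mono_left (nhdsWithin_mono _ fun x hx => ne_of_gt hx)
    have hps : (1 / p s) ≠ 0 := (one_div_pos.2 (hppos s)).ne'
    have hq1 := (hslope c).div (hslope d) hps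
    have hu : Tendsto (u c s) (nhdsWithin s (Ioi s)) (nhds 0) := by
      have := (sol_cu hS c s).continuousAt.continuousWithinAt (s := Ioi s) (x := s)
      rwa [ContinuousWithinAt, (hS c s).1] at this
    have hUl : ∀ e, Tendsto (fun τ => p τ * u' e s τ) (nhdsWithin s (Ioi s)) (nhds 1) := by
      intro e
      have := (sol_cU hS e s).continuousAt.continuousWithinAt (s := Ioi s) (x := s)
      rwa [ContinuousWithinAt, sol_U0 hppos hS] at this
    have := ((hu.mul (hUl c)).div_const c).sub
      (((hu.mul (hUl d)).div_const d).mul hq1)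
    simp only [zero_mul, zero_div, sub_zero] at this
    refine this.congr' ?_
    filter_upwards [Ioo_mem_nhdsGT hsz] with x hx
    have hvx := (hv x hx.1 hx.2.le).ne'
    have hxs : x - s ≠ 0 := sub_ne_zero.2 hx.1.ne'
    simp only [G, Pi.div_apply, slope_def_field, (hS c s).1, (hS d s).1, sub_zero]
    have := hc.ne'
    have := hd.ne'
    field_simp
  have hG0 : ∀ t, s < t → t < z → G t = 0 := by
    intro t k1 k2
    apply le_antisymm
    · rw [← hGz]; exact hGmono ⟨k1, k2.le⟩ ⟨hsz, le_rfl⟩ k2.le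
    · apply le_of_tendsto hlim
      filter_upwards [Ioo_mem_nhdsGT k1] with x hx
      exact hGmono ⟨hx.1, (hx.2.trans k2).le⟩ ⟨k1, k2.le⟩ hx.2.le
  have hU0 : ∀ t, s < t → t < z → p t * u' c s t = 0 := by
    intro t k1 k2
    have e1 : HasDerivAt G 0 t := by
      apply (hasDerivAt_const t (0 : ℝ)).congr_of_eventuallyEq
      filter_upwards [Ioo_mem_nhds k1 k2] with x hx
      exact hG0 x hx.1 hx.2
    have e2 := (hGd t k1 k2.le).unique e1
    have e3 := hGnn t k1 k2.le
    rw [e2] at e3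
    by_contra hne
    have := hppos t
    have : 0 < (p t * u' c s t) ^ 2 / p t * (1 / c - 1 / d) := by positivity
    linarith
  have hlim1 : p s * u' c s s = 0 := by
    have t1 := (sol_cU hS c s).continuousAt.continuousWithinAt (s := Ioi s) (x := s)
    have t2 : Tendsto (fun τ => p τ * u' c s τ) (nhdsWithin s (Ioi s)) (nhds 0) := by
      apply (tendsto_const_nhds (x := (0 : ℝ))).congr'
      filter_upwards [Ioo_mem_nhdsGT hsz] with x hx
      exact (hU0 x hx.1 hx.2).symm
    exact tendsto_nhds_unique t1 t2
  rw [sol_U0 hppos hS] at hlim1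
  norm_num at hlim1

lemma phiStep_strict (hppos : ∀ t, 0 < p t) (hS : IsSolFamily p q w u u') (c : ℝ) (x y : EReal)
    (hx : x ≠ ⊥) (hxy : x < y) : phiStep u c y = ⊤ ∨ phiStep u c x < phiStep u c y := by
  induction y with
  | bot => exact absurd hxy not_lt_bot
  | top => left; exact phiStep_top c
  | coe s' =>
    induction x with
    | bot => exact absurd rfl hx
    | top => exact absurd hxy not_top_lt
    | coe s =>
      rw [phiStep_coe, phiStep_coe]
      exact phiE_strict hppos hS c s s' (EReal.coe_lt_coe_iff.1 hxy)

lemma phiStep_mono (hppos : ∀ t, 0 < p t) (hS : IsSolFamily p q w u u') (c : ℝ) (x y : EReal)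
    (hx : x ≠ ⊥) (hxy : x ≤ y) : phiStep u c x ≤ phiStep u c y := by
  rcases hxy.eq_or_lt with rfl | h
  · exact le_rfl
  rcases phiStep_strict hppos hS c x y hx h with h | h
  · rw [h]; exact le_top
  · exact h.le

lemma phiStep_anti (hppos : ∀ t, 0 < p t) (hqnn : ∀ t, 0 ≤ q t) (hS : IsSolFamily p q w u u')
    (c d : ℝ) (hc : 0 < c) (hcd : c ≤ d) (x : EReal) : phiStep u d x ≤ phiStep u c x := by
  induction x with
  | bot => simp [phiStep]
  | top => simp [phiStep]
  | coe s =>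
    rw [phiStep_coe, phiStep_coe]
    exact phiE_anti hppos hqnn hS c d s hc hcd

end helpers

section iterates

variable {p q m n : ℝ → ℝ} {uM uM' uN uN' : ℝ → ℝ → ℝ → ℝ}

lemma PhiGt_succ (a b : ℝ) (k : ℕ) (x : EReal) : PhiGt uM uN a b (k + 1) x =
    if k % 2 = 0 then phiStep uM a (PhiGt uM uN a b k x)
      else phiStep uN b (PhiGt uM uN a b k x) := by
  simp only [PhiGt, Function.comp]
  split_ifs <;> rfl

lemma PhiLt_eq (a b : ℝ) (k : ℕ) : PhiLt uM uN a b k = PhiGt uN uM b a k := by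
  induction k with
  | zero => rfl
  | succ k ih => simp only [PhiGt, PhiLt, ih]

lemma PhiGt_succ' (a b : ℝ) (k : ℕ) (x : EReal) :
    PhiGt uM uN a b (k + 1) x = PhiGt uN uM b a k (phiStep uM a x) := by
  induction k with
  | zero => rfl
  | succ k ih =>
    rw [PhiGt_succ, ih, PhiGt_succ]
    rcases Nat.mod_two_eq_zero_or_one k with h | h
    · rw [if_neg (by omega), if_pos h]
    · rw [if_pos (by omega), if_neg (by omega)]

lemma PhiGt_ge (hppos : ∀ t, 0 < p t)
    (hM : IsSolFamily p q m uM uM') (hN : IsSolFamily p q n uN uN') (a b : ℝ) (k : ℕ)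
    (x : EReal) : x ≤ PhiGt uM uN a b k x := by
  induction k with
  | zero => exact le_rfl
  | succ k ih =>
    rw [PhiGt_succ]
    split_ifs
    · exact ih.trans (le_phiStep hppos hM _ _)
    · exact ih.trans (le_phiStep hppos hN _ _)

lemma PhiGt_ne_bot (hppos : ∀ t, 0 < p t)
    (hM : IsSolFamily p q m uM uM') (hN : IsSolFamily p q n uN uN') (a b : ℝ) (k : ℕ)
    (x : EReal) (hx : x ≠ ⊥) : PhiGt uM uN a b k x ≠ ⊥ := by
  have := PhiGt_ge hppos hM hN a b k x
  intro h
  rw [h] at this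
  exact hx (le_bot_iff.1 this)

lemma PhiGt_top (a b : ℝ) (k : ℕ) : PhiGt uM uN a b k ⊤ = ⊤ := by
  induction k with
  | zero => rfl
  | succ k ih => rw [PhiGt_succ, ih, phiStep_top, phiStep_top, ite_self]

lemma PhiGt_anti (hppos : ∀ t, 0 < p t) (hqnn : ∀ t, 0 ≤ q t)
    (hM : IsSolFamily p q m uM uM') (hN : IsSolFamily p q n uN uN') (a b a' b' : ℝ)
    (ha : 0 < a) (hb : 0 < b) (haa : a ≤ a') (hbb : b ≤ b') (k : ℕ)
    (x : EReal) (hx : x ≠ ⊥) : PhiGt uM uN a' b' k x ≤ PhiGt uM uN a b k x := by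
  induction k with
  | zero => exact le_rfl
  | succ k ih =>
    have hnb := PhiGt_ne_bot hppos hM hN a' b' k x hx
    rw [PhiGt_succ, PhiGt_succ]
    split_ifs
    · exact (phiStep_mono hppos hM _ _ _ hnb ih).trans (phiStep_anti hppos hqnn hM a a' ha haa _)
    · exact (phiStep_mono hppos hN _ _ _ hnb ih).trans (phiStep_anti hppos hqnn hN b b' hb hbb _)

lemma PhiGt_strict (hppos : ∀ t, 0 < p t)
    (hM : IsSolFamily p q m uM uM') (hN : IsSolFamily p q n uN uN') (a b : ℝ)
    (k : ℕ) (x y : EReal) (hx : x ≠ ⊥) (hxy : x < y) :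
    PhiGt uM uN a b k y = ⊤ ∨ PhiGt uM uN a b k x < PhiGt uM uN a b k y := by
  induction k with
  | zero => exact Or.inr hxy
  | succ k ih =>
    have hnb := PhiGt_ne_bot hppos hM hN a b k x hx
    rw [PhiGt_succ, PhiGt_succ]
    rcases ih with h | h
    · left
      rw [h, phiStep_top, phiStep_top, ite_self]
    · split_ifs
      · exact phiStep_strict hppos hM _ _ _ hnb h
      · exact phiStep_strict hppos hN _ _ _ hnb h

lemma lt_of_phiStep_eq {w : ℝ → ℝ} {u u' : ℝ → ℝ → ℝ → ℝ} (hppos : ∀ t, 0 < p t)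
    (hS : IsSolFamily p q w u u') (c T : ℝ) (x : EReal) (hx : x ≠ ⊥)
    (h : phiStep u c x = (T : EReal)) : x < (T : EReal) := by
  induction x with
  | bot => exact absurd rfl hx
  | top => rw [phiStep_top] at h; exact absurd h (EReal.coe_ne_top T).symm
  | coe s =>
    rw [phiStep_coe] at h
    rw [← h]
    exact lt_phiE_self hppos hS c s

/-- `Φ_k^> < Φ_{k+1}^>`. -/
lemma PhiGt_lt_succ (hppos : ∀ t, 0 < p t)
    (hM : IsSolFamily p q m uM uM') (hN : IsSolFamily p q n uN uN') (a b T₁ T₂ : ℝ) (k : ℕ)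
    (h : PhiGt uM uN a b (k + 1) (T₁ : EReal) = (T₂ : EReal)) :
    PhiGt uM uN a b k (T₁ : EReal) < (T₂ : EReal) := by
  have hnb := PhiGt_ne_bot hppos hM hN a b k T₁ (EReal.coe_ne_bot T₁)
  rw [PhiGt_succ] at h
  split_ifs at h
  · exact lt_of_phiStep_eq hppos hM _ _ _ hnb h
  · exact lt_of_phiStep_eq hppos hN _ _ _ hnb h

/-- `Φ_k^< < Φ_{k+1}^>`. -/
lemma PhiLt_lt_succ (hppos : ∀ t, 0 < p t)
    (hM : IsSolFamily p q m uM uM') (hN : IsSolFamily p q n uN uN') (a b T₁ T₂ : ℝ) (k : ℕ)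
    (h : PhiGt uM uN a b (k + 1) (T₁ : EReal) = (T₂ : EReal)) :
    PhiGt uN uM b a k (T₁ : EReal) < (T₂ : EReal) := by
  rw [PhiGt_succ'] at h
  have hlt : (T₁ : EReal) < phiStep uM a (T₁ : EReal) := by
    rw [phiStep_coe]; exact lt_phiE_self hppos hM a T₁
  rcases PhiGt_strict hppos hN hM b a k _ _ (EReal.coe_ne_bot T₁) hlt with h' | h'
  · rw [h] at h'; exact absurd h' (EReal.coe_ne_top T₂)
  · rwa [h] at h'

lemma PhiGt_cont (hp : Continuous p) (hq : Continuous q) (hm : Continuous m) (hn : Continuous n)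
    (hppos : ∀ t, 0 < p t)
    (hM : IsSolFamily p q m uM uM') (hN : IsSolFamily p q n uN uN') (a b T₁ : ℝ) (k : ℕ) :
    Continuous fun r : ℝ => PhiGt uM uN (r * a) (r * b) k (T₁ : EReal) := by
  induction k with
  | zero => exact continuous_const
  | succ k ih =>
    rw [continuous_iff_continuousAt] at ih ⊢
    intro r
    have hnb := PhiGt_ne_bot hppos hM hN (r * a) (r * b) k T₁ (EReal.coe_ne_bot T₁)
    simp only [PhiGt_succ]
    split_ifs
    · exact ContinuousAt.comp (f := fun r : ℝ => (r * a, PhiGt uM uN (r * a) (r * b) k (T₁ : EReal)))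
        (phiStep_cont hp hq hm hppos hM _ _ hnb)
        (ContinuousAt.prodMk (by fun_prop) (ih r))
    · exact ContinuousAt.comp (f := fun r : ℝ => (r * b, PhiGt uM uN (r * a) (r * b) k (T₁ : EReal)))
        (phiStep_cont hp hq hn hppos hN _ _ hnb)
        (ContinuousAt.prodMk (by fun_prop) (ih r))

/-- Intermediate value argument along the ray through `(a, b)`. -/
lemma exists_ray (hp : Continuous p) (hq : Continuous q) (hm : Continuous m) (hn : Continuous n)
    (hppos : ∀ t, 0 < p t) (hqnn : ∀ t, 0 ≤ q t)
    (hM : IsSolFamily p q m uM uM') (hN : IsSolFamily p q n uN uN') (a b T₁ T₂ : ℝ) (k : ℕ)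
    (hk : 1 ≤ k) (h : PhiGt uM uN a b k (T₁ : EReal) < (T₂ : EReal)) :
    ∃ r : ℝ, 0 < r ∧ PhiGt uM uN (r * a) (r * b) k (T₁ : EReal) = (T₂ : EReal) := by
  have h0 : PhiGt uM uN (0 * a) (0 * b) k (T₁ : EReal) = ⊤ := by
    obtain ⟨j, rfl⟩ : ∃ j, k = j + 1 := ⟨k - 1, by omega⟩
    rw [PhiGt_succ', zero_mul, zero_mul, phiStep_coe, phiE_zero hppos hqnn hM, PhiGt_top]
  have hiv := intermediate_value_Icc' (zero_le_one (α := ℝ))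
    (PhiGt_cont hp hq hm hn hppos hM hN a b T₁ k).continuousOn
  obtain ⟨r, hr, hreq⟩ := hiv (show (T₂ : EReal) ∈ _ by
    constructor
    · simpa using h.le
    · rw [h0]; exact le_top)
  refine ⟨r, lt_of_le_of_ne hr.1 ?_, hreq⟩
  rintro rfl
  exact EReal.coe_ne_top T₂ (hreq.symm.trans h0)

end iterates

/-- For `k ≥ 2`, if `C_{k+1}^{>++}` is nonempty then so are
`C_k^{>++}` and `C_k^{<++}`; moreover the curves `f_k^>` and `f_k^<` lie strictly
below `f_{k+1}^>`: for a common abscissa `x`, the ordinate on `C_k^{>++}`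
(resp. `C_k^{<++}`) is strictly smaller than the one on `C_{k+1}^{>++}`. -/
theorem curves_below_next
    (p q m n : ℝ → ℝ) (uM uM' uN uN' : ℝ → ℝ → ℝ → ℝ) (T₁ T₂ : ℝ) (k : ℕ)
    (hk : 2 ≤ k) (hT : T₁ < T₂)
    (hp : Continuous p) (hq : Continuous q) (hm : Continuous m) (hn : Continuous n)
    (hppos : ∀ t, 0 < p t) (hqnn : ∀ t, 0 ≤ q t)
    (hM : IsSolFamily p q m uM uM') (hN : IsSolFamily p q n uN uN')
    (hne : (CGt uM uN T₁ T₂ (k + 1)).Nonempty) :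
    (CGt uM uN T₁ T₂ k).Nonempty ∧ (CLt uM uN T₁ T₂ k).Nonempty ∧
    (∀ x y y' : ℝ, (x, y) ∈ CGt uM uN T₁ T₂ k →
      (x, y') ∈ CGt uM uN T₁ T₂ (k + 1) → y < y') ∧
    (∀ x y y' : ℝ, (x, y) ∈ CLt uM uN T₁ T₂ k →
      (x, y') ∈ CGt uM uN T₁ T₂ (k + 1) → y < y') := by
  obtain ⟨⟨a, b⟩, ha, hb, hab⟩ := hne
  refine ⟨?_, ?_, ?_, ?_⟩
  · obtain ⟨r, hr, h⟩ := exists_ray hp hq hm hn hppos hqnn hM hN a b T₁ T₂ k (by omega)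
      (PhiGt_lt_succ hppos hM hN a b T₁ T₂ k hab)
    exact ⟨(r * a, r * b), mul_pos hr ha, mul_pos hr hb, h⟩
  · obtain ⟨r, hr, h⟩ := exists_ray hp hq hn hm hppos hqnn hN hM b a T₁ T₂ k (by omega)
      (PhiLt_lt_succ hppos hM hN a b T₁ T₂ k hab)
    refine ⟨(r * a, r * b), mul_pos hr ha, mul_pos hr hb, ?_⟩
    rw [PhiLt_eq]
    exact h
  · rintro x y y' ⟨hx, hy, h⟩ ⟨_, hy', h'⟩
    by_contra hcon
    have h1 := PhiGt_lt_succ hppos hM hN x y' T₁ T₂ k h'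
    have h2 := PhiGt_anti hppos hqnn hM hN x y' x y hx hy' le_rfl (not_lt.1 hcon) k T₁
      (EReal.coe_ne_bot T₁)
    exact absurd (h2.trans_lt h1) (by rw [show PhiGt uM uN x y k T₁ = T₂ from h]; exact lt_irrefl _)
  · rintro x y y' ⟨hx, hy, h⟩ ⟨_, hy', h'⟩
    by_contra hcon
    have h1 := PhiLt_lt_succ hppos hM hN x y' T₁ T₂ k h'
    have h2 := PhiGt_anti hppos hqnn hN hM y' x y x hy' hx (not_lt.1 hcon) le_rfl k T₁
      (EReal.coe_ne_bot T₁)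
    rw [PhiLt_eq] at h
    exact absurd (h2.trans_lt h1) (by rw [show PhiGt uN uM y x k T₁ = T₂ from h]; exact lt_irrefl _)
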